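/- The linear automorphism group Lin(Z¹² + F₁₂(X,Y)) ⊆ PGL(3,ℂ) of the smooth plane curve C₁₂ : Z¹² + F₁₂(X,Y) = 0 has order 720 = 60·12, and there exists a group homomorphism φ : ℤ/2 → Aut(SL(2,5)) such that this group is isomorphic to ℤ/3 × (SL(2,5) ⋊_φ ℤ/2). -/

import Mathlib

noncomputable section
open Matrix MvPolynomial

/-- The subgroup of nonzero scalar matrices in `GL(3, ℂ)`. -/
def scalarSub : Subgroup (GL (Fin 3) ℂ) :=
  (Units.map (algebraMap ℂ (Matrix (Fin 3) (Fin 3) ℂ)).toMonoidHom).range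

instance : scalarSub.Normal := by
  constructor
  rintro n ⟨c, rfl⟩ g
  refine ⟨c, ?_⟩
  ext
  simp only [Units.coe_map, RingHom.toMonoidHom_eq_coe, MonoidHom.coe_coe, Units.val_mul]
  rw [← Algebra.commutes (↑c : ℂ) (↑g : Matrix (Fin 3) (Fin 3) ℂ), mul_assoc,
    ← Units.val_mul, mul_inv_cancel, Units.val_one, mul_one]

/-- `PGL(3, ℂ)`: the quotient of `GL(3, ℂ)` by the nonzero scalar matrices. -/
abbrev PGL3 := GL (Fin 3) ℂ ⧸ scalarSub

/-- `g` maps the zero set of `F` in `ℂ³` onto itself. -/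
def Preserves (F : MvPolynomial (Fin 3) ℂ) (g : GL (Fin 3) ℂ) : Prop :=
  (fun v => (g : Matrix (Fin 3) (Fin 3) ℂ).mulVec v) '' {v : Fin 3 → ℂ | eval v F = 0}
    = {v : Fin 3 → ℂ | eval v F = 0}

/-- The subgroup of `GL(3, ℂ)` of matrices mapping the zero set of `F` onto itself. -/
def LinGL (F : MvPolynomial (Fin 3) ℂ) : Subgroup (GL (Fin 3) ℂ) where
  carrier := {g | Preserves F g}
  one_mem' := by
    show Preserves F 1
    unfold Preserves
    simp [Matrix.one_mulVec]
  mul_mem' := by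
    intro a b ha hb
    show Preserves F (a * b)
    unfold Preserves at *
    have h : (fun v => ((a * b : GL (Fin 3) ℂ) : Matrix (Fin 3) (Fin 3) ℂ).mulVec v)
        = (fun v => (a : Matrix (Fin 3) (Fin 3) ℂ).mulVec v) ∘
          (fun v => (b : Matrix (Fin 3) (Fin 3) ℂ).mulVec v) := by
      funext v
      simp [Matrix.mulVec_mulVec]
    rw [h, Set.image_comp, hb, ha]
  inv_mem' := by
    intro a ha
    show Preserves F a⁻¹
    unfold Preserves at *
    conv_lhs => rw [← ha, ← Set.image_comp]
    have h : ((fun v => ((a⁻¹ : GL (Fin 3) ℂ) : Matrix (Fin 3) (Fin 3) ℂ).mulVec v) ∘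
        (fun v => (a : Matrix (Fin 3) (Fin 3) ℂ).mulVec v)) = id := by
      funext v
      rw [Function.comp_apply, Matrix.mulVec_mulVec, ← Units.val_mul, inv_mul_cancel,
        Units.val_one, Matrix.one_mulVec, id_eq]
    rw [h, Set.image_id]

/-- The linear automorphism group `Lin(F) ⊆ PGL(3, ℂ)`:
classes of matrices mapping the zero set of `F` onto itself. -/
def Lin (F : MvPolynomial (Fin 3) ℂ) : Subgroup PGL3 :=
  (LinGL F).map (QuotientGroup.mk' scalarSub)

/-- `G = Z¹² + F₁₂(X, Y)` with `X = X 0`, `Y = X 1`, `Z = X 2`. -/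
def G12 : MvPolynomial (Fin 3) ℂ :=
  X 2 ^ 12 + X 0 * X 1 * (X 0 ^ 10 + 11 * X 0 ^ 5 * X 1 ^ 5 - X 1 ^ 10)


/-! ### Exact arithmetic in `ℤ[ζ₅]` -/

abbrev Z5 := ℤ × ℤ × ℤ × ℤ

def Z5.add (a b : Z5) : Z5 := (a.1 + b.1, a.2.1 + b.2.1, a.2.2.1 + b.2.2.1, a.2.2.2 + b.2.2.2)

def Z5.sub (a b : Z5) : Z5 := (a.1 - b.1, a.2.1 - b.2.1, a.2.2.1 - b.2.2.1, a.2.2.2 - b.2.2.2)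

def Z5.mul : Z5 → Z5 → Z5
  | (a0, a1, a2, a3), (b0, b1, b2, b3) =>
    let c4 := a1 * b3 + a2 * b2 + a3 * b1
    (a0 * b0 + a2 * b3 + a3 * b2 - c4,
     a0 * b1 + a1 * b0 + a3 * b3 - c4,
     a0 * b2 + a1 * b1 + a2 * b0 - c4,
     a0 * b3 + a1 * b2 + a2 * b1 + a3 * b0 - c4)

def Z5.ev (z : ℂ) (a : Z5) : ℂ := a.1 + a.2.1 * z + a.2.2.1 * z ^ 2 + a.2.2.2 * z ^ 3

/-- powers of `ζ`. -/
def Z5.zp (n : ZMod 5) : Z5 :=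
  if n = 0 then (1, 0, 0, 0) else if n = 1 then (0, 1, 0, 0) else if n = 2 then (0, 0, 1, 0)
  else if n = 3 then (0, 0, 0, 1) else (-1, -1, -1, -1)

/-- `√5 = ζ - ζ² - ζ³ + ζ⁴`. -/
def Z5.s5 : Z5 := (-1, 0, -2, -2)

def chi5 (n : ZMod 5) : ℤ := if n = 0 then 0 else if n = 1 ∨ n = 4 then 1 else -1

def Z5.smul (k : ℤ) (a : Z5) : Z5 := (k * a.1, k * a.2.1, k * a.2.2.1, k * a.2.2.2)

/-- inverse on `ZMod 5` (computable form). -/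
def inv5 (n : ZMod 5) : ZMod 5 := n ^ 3

/-- `√5` times the entry of the odd Weil representation of `SL(2,5)`. -/
def weilN (a b c d x y : ZMod 5) : Z5 :=
  if c = 0 then
    Z5.smul (chi5 a * ((if a * x = y then 1 else 0) - (if a * x = -y then 1 else 0)))
      (Z5.mul Z5.s5 (Z5.zp (a * b * x * x * 3)))
  else
    Z5.smul (-chi5 c) (Z5.sub (Z5.zp ((a * x * x - 2 * x * y + d * y * y) * inv5 (2 * c)))
      (Z5.zp ((a * x * x + 2 * x * y + d * y * y) * inv5 (2 * c))))

def rep5 (i : Fin 2) : ZMod 5 := if i = 0 then 1 else 3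

theorem weil_check_U : ∀ a b c d : ZMod 5, a * d - b * c = 1 → ∀ t : ZMod 5, ∀ i j : Fin 2,
    Z5.mul Z5.s5 (weilN a (a * t + b) c (c * t + d) (rep5 i) (rep5 j)) =
      Z5.add (Z5.mul (weilN a b c d (rep5 i) 1) (weilN 1 t 0 1 1 (rep5 j)))
        (Z5.mul (weilN a b c d (rep5 i) 3) (weilN 1 t 0 1 3 (rep5 j))) := by
  decide +kernel

theorem weil_check_W : ∀ a b c d : ZMod 5, a * d - b * c = 1 → ∀ i j : Fin 2,
    Z5.mul Z5.s5 (weilN b (-a) d (-c) (rep5 i) (rep5 j)) =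
      Z5.add (Z5.mul (weilN a b c d (rep5 i) 1) (weilN 0 (-1) 1 0 1 (rep5 j)))
        (Z5.mul (weilN a b c d (rep5 i) 3) (weilN 0 (-1) 1 0 3 (rep5 j))) := by
  decide +kernel

theorem weil_check_inj : ∀ a b c d : ZMod 5, a * d - b * c = 1 →
    (∀ i j : Fin 2, weilN a b c d (rep5 i) (rep5 j) = if i = j then Z5.s5 else (0, 0, 0, 0)) →
    a = 1 ∧ b = 0 ∧ c = 0 ∧ d = 1 := by
  decide +kernel

theorem weil_check_det : ∀ a b c d : ZMod 5, a * d - b * c = 1 →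
    Z5.sub (Z5.mul (weilN a b c d 1 1) (weilN a b c d 3 3))
      (Z5.mul (weilN a b c d 1 3) (weilN a b c d 3 1)) = (5, 0, 0, 0) := by
  decide +kernel

theorem sl_words : ∀ a b c d : ZMod 5, a * d - b * c = 1 → ∃ i j k m : ZMod 5,
    a = i * j * k - i - k ∧ b = (i * j - 1) * (k * m - 1) - i * m ∧
    c = j * k - 1 ∧ d = j * (k * m - 1) - m := by
  decide +kernel
theorem card_sl : Nat.card (Matrix.SpecialLinearGroup (Fin 2) (ZMod 5)) = 120 := by
  rw [Nat.card_eq_fintype_card]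
  decide +kernel


abbrev SL25 := Matrix.SpecialLinearGroup (Fin 2) (ZMod 5)

def zt : ℂ := Complex.exp (2 * Real.pi * Complex.I / (5 : ℕ))

theorem zt_prim : IsPrimitiveRoot zt 5 := Complex.isPrimitiveRoot_exp 5 (by norm_num)

theorem zt_five : zt ^ 5 = 1 := zt_prim.pow_eq_one

theorem zt_ne : zt ≠ 0 := by
  intro h
  have := zt_five
  rw [h] at this
  norm_num at this

theorem zt_four : zt ^ 4 = -1 - zt - zt ^ 2 - zt ^ 3 := by
  have h := zt_prim.geom_sum_eq_zero (by norm_num)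
  simp only [Finset.sum_range_succ, Finset.sum_range_zero] at h
  linear_combination h

theorem ev_add (a b : Z5) : Z5.ev zt (Z5.add a b) = Z5.ev zt a + Z5.ev zt b := by
  simp only [Z5.ev, Z5.add]; push_cast; ring

theorem ev_sub (a b : Z5) : Z5.ev zt (Z5.sub a b) = Z5.ev zt a - Z5.ev zt b := by
  simp only [Z5.ev, Z5.sub]; push_cast; ring

theorem ev_mul (a b : Z5) : Z5.ev zt (Z5.mul a b) = Z5.ev zt a * Z5.ev zt b := by
  obtain ⟨a0, a1, a2, a3⟩ := a
  obtain ⟨b0, b1, b2, b3⟩ := b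
  simp only [Z5.ev, Z5.mul]; push_cast
  linear_combination (-(a1 * b3 + a2 * b2 + a3 * b1 : ℂ)) * zt_four -
    ((a2 * b3 + a3 * b2 : ℂ) + a3 * b3 * zt) * zt_five

theorem ev_zp (n : ZMod 5) : Z5.ev zt (Z5.zp n) = zt ^ n.val := by
  have h4 := zt_four
  fin_cases n
  · change Z5.ev zt (1, 0, 0, 0) = zt ^ 0
    simp [Z5.ev]
  · change Z5.ev zt (0, 1, 0, 0) = zt ^ 1
    simp [Z5.ev]
  · change Z5.ev zt (0, 0, 1, 0) = zt ^ 2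
    simp [Z5.ev]
  · change Z5.ev zt (0, 0, 0, 1) = zt ^ 3
    simp [Z5.ev]
  · change Z5.ev zt (-1, -1, -1, -1) = zt ^ 4
    simp only [Z5.ev]
    rw [h4]; push_cast; ring

theorem ev_inj {a b : Z5} (h : Z5.ev zt a = Z5.ev zt b) : a = b := by
  obtain ⟨a0, a1, a2, a3⟩ := a
  obtain ⟨b0, b1, b2, b3⟩ := b
  let p : Polynomial ℤ := Polynomial.C (a0 - b0) + Polynomial.C (a1 - b1) * Polynomial.X +
    Polynomial.C (a2 - b2) * Polynomial.X ^ 2 + Polynomial.C (a3 - b3) * Polynomial.X ^ 3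
  have hp : Polynomial.aeval zt p = 0 := by
    simp only [Z5.ev] at h
    simp only [p, map_add, map_mul, Polynomial.aeval_C, map_pow, Polynomial.aeval_X]
    simp only [algebraMap_int_eq, eq_intCast]
    push_cast
    linear_combination h
  have hd : p.natDegree ≤ 3 := by
    simp only [p]; compute_degree
  have hz : p = 0 := by
    by_contra hne
    have h1 := minpoly.isIntegrallyClosed_dvd (R := ℤ) (zt_prim.isIntegral (by norm_num)) hp
    rw [← Polynomial.cyclotomic_eq_minpoly zt_prim (by norm_num)] at h1
    have h2 := Polynomial.natDegree_le_of_dvd h1 hne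
    rw [Polynomial.natDegree_cyclotomic] at h2
    have : Nat.totient 5 = 4 := by decide
    omega
  have c0 := congrArg (fun q => Polynomial.coeff q 0) hz
  have c1 := congrArg (fun q => Polynomial.coeff q 1) hz
  have c2 := congrArg (fun q => Polynomial.coeff q 2) hz
  have c3 := congrArg (fun q => Polynomial.coeff q 3) hz
  simp only [p, Polynomial.coeff_add, Polynomial.coeff_C_mul, Polynomial.coeff_X,
    Polynomial.coeff_X_pow, Polynomial.coeff_C, Polynomial.coeff_zero] at c0 c1 c2 c3
  norm_num at c0 c1 c2 c3
  simp only [Prod.mk.injEq]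
  omega

def s5v : ℂ := Z5.ev zt Z5.s5

theorem s5v_sq : s5v * s5v = 5 := by
  rw [s5v, ← ev_mul]
  have : Z5.mul Z5.s5 Z5.s5 = (5, 0, 0, 0) := by decide
  rw [this]; simp [Z5.ev]

theorem s5v_ne : s5v ≠ 0 := by
  intro h
  have := s5v_sq
  rw [h] at this
  norm_num at this

def weilM (g : SL25) : Matrix (Fin 2) (Fin 2) ℂ :=
  Matrix.of fun i j =>
    Z5.ev zt (weilN (g.1 0 0) (g.1 0 1) (g.1 1 0) (g.1 1 1) (rep5 i) (rep5 j)) / s5v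

theorem sl_val_mul (g h : SL25) : (g * h).1 = g.1 * h.1 := rfl

def UU (t : ZMod 5) : SL25 := ⟨!![1, t; 0, 1], by simp [Matrix.det_fin_two]⟩

def WW : SL25 := ⟨!![0, -1; 1, 0], by simp [Matrix.det_fin_two]⟩

theorem UU_val (t : ZMod 5) : (UU t).1 = !![1, t; 0, 1] := rfl

theorem WW_val : WW.1 = !![0, -1; 1, 0] := rfl

theorem sl_det (g : SL25) : g.1 0 0 * g.1 1 1 - g.1 0 1 * g.1 1 0 = 1 := by
  have := g.2
  rwa [Matrix.det_fin_two] at this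

theorem weil_aux {x p q r s : Z5} (h : Z5.mul Z5.s5 x = Z5.add (Z5.mul p q) (Z5.mul r s)) :
    Z5.ev zt x / s5v = Z5.ev zt p / s5v * (Z5.ev zt q / s5v) +
      Z5.ev zt r / s5v * (Z5.ev zt s / s5v) := by
  have h' := congrArg (Z5.ev zt) h
  rw [ev_mul, ev_add, ev_mul, ev_mul] at h'
  have hs := s5v_ne
  change s5v * _ = _ at h'
  field_simp
  linear_combination h'

theorem weilM_mul_UU (g : SL25) (t : ZMod 5) : weilM (g * UU t) = weilM g * weilM (UU t) := by
  ext i j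
  have h := weil_check_U _ _ _ _ (sl_det g) t i j
  have e00 : (g * UU t).1 0 0 = g.1 0 0 := by
    simp only [sl_val_mul, UU_val]; simp [Matrix.mul_apply, Fin.sum_univ_two]
  have e01 : (g * UU t).1 0 1 = g.1 0 0 * t + g.1 0 1 := by
    simp only [sl_val_mul, UU_val]; simp [Matrix.mul_apply, Fin.sum_univ_two]
  have e10 : (g * UU t).1 1 0 = g.1 1 0 := by
    simp only [sl_val_mul, UU_val]; simp [Matrix.mul_apply, Fin.sum_univ_two]
  have e11 : (g * UU t).1 1 1 = g.1 1 0 * t + g.1 1 1 := by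
    simp only [sl_val_mul, UU_val]; simp [Matrix.mul_apply, Fin.sum_univ_two]
  rw [Matrix.mul_apply, Fin.sum_univ_two]
  simp only [weilM, Matrix.of_apply, e00, e01, e10, e11]
  exact weil_aux h

theorem weilM_mul_WW (g : SL25) : weilM (g * WW) = weilM g * weilM WW := by
  ext i j
  have h := weil_check_W _ _ _ _ (sl_det g) i j
  have e00 : (g * WW).1 0 0 = g.1 0 1 := by
    simp only [sl_val_mul, WW_val]; simp [Matrix.mul_apply, Fin.sum_univ_two]
  have e01 : (g * WW).1 0 1 = -g.1 0 0 := by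
    simp only [sl_val_mul, WW_val]; simp [Matrix.mul_apply, Fin.sum_univ_two]
  have e10 : (g * WW).1 1 0 = g.1 1 1 := by
    simp only [sl_val_mul, WW_val]; simp [Matrix.mul_apply, Fin.sum_univ_two]
  have e11 : (g * WW).1 1 1 = -g.1 1 0 := by
    simp only [sl_val_mul, WW_val]; simp [Matrix.mul_apply, Fin.sum_univ_two]
  rw [Matrix.mul_apply, Fin.sum_univ_two]
  simp only [weilM, Matrix.of_apply, e00, e01, e10, e11]
  exact weil_aux h

theorem sl_gen (g : SL25) : ∃ i j k m : ZMod 5,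
    g = UU i * WW * UU j * WW * UU k * WW * UU m := by
  obtain ⟨i, j, k, m, h1, h2, h3, h4⟩ := sl_words _ _ _ _ (sl_det g)
  refine ⟨i, j, k, m, ?_⟩
  ext a b
  fin_cases a <;> fin_cases b
  · simp only [sl_val_mul, UU_val, WW_val]; simp [Matrix.mul_apply, Fin.sum_univ_two]; exact h1.trans (by ring)
  · simp only [sl_val_mul, UU_val, WW_val]; simp [Matrix.mul_apply, Fin.sum_univ_two]; exact h2.trans (by ring)
  · simp only [sl_val_mul, UU_val, WW_val]; simp [Matrix.mul_apply, Fin.sum_univ_two]; exact h3.trans (by ring)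
  · simp only [sl_val_mul, UU_val, WW_val]; simp [Matrix.mul_apply, Fin.sum_univ_two]; exact h4.trans (by ring)

theorem weilM_mul (g h : SL25) : weilM (g * h) = weilM g * weilM h := by
  have key : ∀ x y : SL25, (∀ g, weilM (g * x) = weilM g * weilM x) →
      (∀ g, weilM (g * y) = weilM g * weilM y) →
      (∀ g, weilM (g * (x * y)) = weilM g * weilM (x * y)) := by
    intro x y hx hy g
    rw [← mul_assoc, hy, hx, hy, mul_assoc]
  obtain ⟨i, j, k, m, rfl⟩ := sl_gen h
  have hu := fun t g => weilM_mul_UU g t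
  exact key _ _ (key _ _ (key _ _ (key _ _ (key _ _ (key _ _ (hu i) weilM_mul_WW) (hu j))
    weilM_mul_WW) (hu k)) weilM_mul_WW) (hu m) g

theorem weilM_one : weilM 1 = 1 := by
  have hs := s5v_ne
  ext i j
  fin_cases i <;> fin_cases j
  · have : weilN 1 0 0 1 1 1 = Z5.s5 := by decide
    simp [weilM, rep5, this]
    exact div_self hs
  · have : weilN 1 0 0 1 1 3 = (0, 0, 0, 0) := by decide
    simp [weilM, rep5, this, Z5.ev]
  · have : weilN 1 0 0 1 3 1 = (0, 0, 0, 0) := by decide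
    simp [weilM, rep5, this, Z5.ev]
  · have : weilN 1 0 0 1 3 3 = Z5.s5 := by decide
    simp [weilM, rep5, this]
    exact div_self hs

theorem weilM_inj (g : SL25) (h : weilM g = 1) : g = 1 := by
  have hs := s5v_ne
  have h' : ∀ i j : Fin 2, weilN (g.1 0 0) (g.1 0 1) (g.1 1 0) (g.1 1 1) (rep5 i) (rep5 j) =
      if i = j then Z5.s5 else (0, 0, 0, 0) := by
    intro i j
    have hij := congrFun (congrFun h i) j
    simp only [weilM, Matrix.of_apply, Matrix.one_apply] at hij
    rw [div_eq_iff hs] at hij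
    apply ev_inj
    rw [hij]
    split_ifs
    · rw [one_mul]; rfl
    · simp [Z5.ev]
  obtain ⟨h1, h2, h3, h4⟩ := weil_check_inj _ _ _ _ (sl_det g) h'
  ext a b
  fin_cases a <;> fin_cases b
  · simpa using h1
  · simpa using h2
  · simpa using h3
  · simpa using h4

theorem weilM_det (g : SL25) : (weilM g).det = 1 := by
  have hs := s5v_ne
  have h := congrArg (Z5.ev zt) (weil_check_det _ _ _ _ (sl_det g))
  rw [ev_sub, ev_mul, ev_mul] at h
  have e5 : Z5.ev zt (5, 0, 0, 0) = s5v * s5v := by rw [s5v_sq]; simp [Z5.ev]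
  rw [e5] at h
  rw [Matrix.det_fin_two]
  have r0 : rep5 0 = 1 := rfl
  have r1 : rep5 1 = 3 := rfl
  simp only [weilM, Matrix.of_apply, r0, r1]
  field_simp
  linear_combination h

def weilHom : SL25 →* GL (Fin 2) ℂ :=
  MonoidHom.toHomUnits { toFun := weilM, map_one' := weilM_one, map_mul' := weilM_mul }

theorem weilHom_coe (g : SL25) : (weilHom g : Matrix (Fin 2) (Fin 2) ℂ) = weilM g := rfl


/-! ### The binary form -/

def FF {R : Type*} [CommRing R] (x y : R) : R := x * y * (x ^ 10 + 11 * x ^ 5 * y ^ 5 - y ^ 10)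

theorem FF_smul (k x y : ℂ) : FF (k * x) (k * y) = k ^ 12 * FF x y := by
  simp only [FF]; ring

theorem FF_golden (t x y : ℂ) (ht : t ^ 2 = 1 - t) :
    FF (x - t * y) (-(t * x) - y) = (1 + t ^ 2) ^ 6 * FF x y := by
  simp only [FF]
  grind

def tau : ℂ := Z5.ev zt (-1, 0, -1, -1)

theorem tau_sq : tau ^ 2 = 1 - tau := by
  have h : Z5.add (Z5.mul (-1, 0, -1, -1) (-1, 0, -1, -1)) (-1, 0, -1, -1) = (1, 0, 0, 0) := by
    decide
  have h' := congrArg (Z5.ev zt) h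
  rw [ev_add, ev_mul] at h'
  change tau * tau + tau = _ at h'
  have e : Z5.ev zt (1, 0, 0, 0) = 1 := by simp [Z5.ev]
  rw [e] at h'
  linear_combination h'

theorem tau_ne : tau ≠ 0 := by
  intro h
  have := tau_sq
  rw [h] at this
  norm_num at this

def kap : ℂ := Z5.ev zt (1, 2, 1, 1) / s5v

theorem weilM_WW : weilM WW = !![kap, -(kap * tau); -(kap * tau), -kap] := by
  have h0 : ∀ a : Z5, Z5.ev zt (Z5.sub (0, 0, 0, 0) a) = - Z5.ev zt a := by
    intro a; rw [ev_sub]; simp [Z5.ev]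
  have e1 : weilN 0 (-1) 1 0 1 1 = (1, 2, 1, 1) := by decide
  have e2 : weilN 0 (-1) 1 0 1 3 =
    Z5.sub (0, 0, 0, 0) (Z5.mul (1, 2, 1, 1) (-1, 0, -1, -1)) := by decide
  have e3 : weilN 0 (-1) 1 0 3 1 =
    Z5.sub (0, 0, 0, 0) (Z5.mul (1, 2, 1, 1) (-1, 0, -1, -1)) := by decide
  have e4 : weilN 0 (-1) 1 0 3 3 = Z5.sub (0, 0, 0, 0) (1, 2, 1, 1) := by decide
  ext i j
  fin_cases i <;> fin_cases j
  · change Z5.ev zt (weilN 0 (-1) 1 0 1 1) / s5v = kap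
    rw [e1]; rfl
  · change Z5.ev zt (weilN 0 (-1) 1 0 1 3) / s5v = -(kap * tau)
    rw [e2, h0, ev_mul, kap, tau]; ring
  · change Z5.ev zt (weilN 0 (-1) 1 0 3 1) / s5v = -(kap * tau)
    rw [e3, h0, ev_mul, kap, tau]; ring
  · change Z5.ev zt (weilN 0 (-1) 1 0 3 3) / s5v = -kap
    rw [e4, h0, kap]; ring

theorem kap_sq : kap ^ 2 * (1 + tau ^ 2) = -1 := by
  have h := weilM_det WW
  rw [weilM_WW, Matrix.det_fin_two_of] at h
  linear_combination -h

theorem kap_ne : kap ≠ 0 := by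
  intro h
  have := kap_sq
  rw [h] at this
  norm_num at this

def ztp (n : ZMod 5) : ℂ := zt ^ n.val

theorem weilM_UU (t : ZMod 5) : weilM (UU t) = !![ztp (3 * t), 0; 0, ztp (2 * t)] := by
  have hs := s5v_ne
  have e : ∀ t : ZMod 5, weilN 1 t 0 1 1 1 = Z5.mul Z5.s5 (Z5.zp (3 * t)) ∧
    weilN 1 t 0 1 1 3 = (0, 0, 0, 0) ∧ weilN 1 t 0 1 3 1 = (0, 0, 0, 0) ∧
    weilN 1 t 0 1 3 3 = Z5.mul Z5.s5 (Z5.zp (2 * t)) := by decide +kernel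
  obtain ⟨e1, e2, e3, e4⟩ := e t
  ext i j
  fin_cases i <;> fin_cases j
  · change Z5.ev zt (weilN 1 t 0 1 1 1) / s5v = ztp (3 * t)
    rw [e1, ev_mul, ev_zp, ztp]; exact mul_div_cancel_left₀ _ hs
  · change Z5.ev zt (weilN 1 t 0 1 1 3) / s5v = 0
    rw [e2]; simp [Z5.ev]
  · change Z5.ev zt (weilN 1 t 0 1 3 1) / s5v = 0
    rw [e3]; simp [Z5.ev]
  · change Z5.ev zt (weilN 1 t 0 1 3 3) / s5v = ztp (2 * t)
    rw [e4, ev_mul, ev_zp, ztp]; exact mul_div_cancel_left₀ _ hs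

def DD : SL25 := ⟨!![2, 0; 0, 3], by rw [Matrix.det_fin_two_of]; decide⟩

theorem weilM_DD : weilM DD = !![0, 1; -1, 0] := by
  have hs := s5v_ne
  have e1 : weilN 2 0 0 3 1 1 = (0, 0, 0, 0) := by decide
  have e2 : weilN 2 0 0 3 1 3 = Z5.s5 := by decide
  have e3 : weilN 2 0 0 3 3 1 = Z5.sub (0, 0, 0, 0) Z5.s5 := by decide
  have e4 : weilN 2 0 0 3 3 3 = (0, 0, 0, 0) := by decide
  ext i j
  fin_cases i <;> fin_cases j
  · change Z5.ev zt (weilN 2 0 0 3 1 1) / s5v = 0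
    rw [e1]; simp [Z5.ev]
  · change Z5.ev zt (weilN 2 0 0 3 1 3) / s5v = 1
    rw [e2]; exact div_self hs
  · change Z5.ev zt (weilN 2 0 0 3 3 1) / s5v = -1
    rw [e3, ev_sub]
    change (_ - s5v) / s5v = -1
    simp [Z5.ev, hs, neg_div]
  · change Z5.ev zt (weilN 2 0 0 3 3 3) / s5v = 0
    rw [e4]; simp [Z5.ev]

theorem ztp_ne (n : ZMod 5) : ztp n ≠ 0 := pow_ne_zero _ zt_ne

theorem ztp_add (m n : ZMod 5) : ztp (m + n) = ztp m * ztp n := by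
  rw [ztp, ztp, ztp, ← pow_add, ZMod.val_add]
  conv_rhs => rw [← Nat.div_add_mod (m.val + n.val) 5, pow_add, pow_mul, zt_five, one_pow, one_mul]

theorem ztp_five (n : ZMod 5) : ztp n ^ 5 = 1 := by
  rw [ztp, ← pow_mul, mul_comm, pow_mul, zt_five, one_pow]

theorem ztp_surj (x : ℂ) (h : x ^ 5 = 1) : ∃ n, ztp n = x := by
  obtain ⟨i, hi, h⟩ := zt_prim.eq_pow_of_pow_eq_one h
  refine ⟨(i : ZMod 5), ?_⟩
  rw [ztp, ZMod.val_natCast, Nat.mod_eq_of_lt hi, h]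

/-- The stabilizer of the binary form in `GL(2, ℂ)`. -/
def HH : Subgroup (GL (Fin 2) ℂ) where
  carrier := {A | ∀ x y : ℂ, FF (A.1 0 0 * x + A.1 0 1 * y) (A.1 1 0 * x + A.1 1 1 * y) = FF x y}
  one_mem' := by
    intro x y
    simp
  mul_mem' := by
    intro A B hA hB x y
    rw [← hB x y, ← hA (B.1 0 0 * x + B.1 0 1 * y) (B.1 1 0 * x + B.1 1 1 * y)]
    simp only [Units.val_mul, Matrix.mul_apply, Fin.sum_univ_two]
    congr 1 <;> ring
  inv_mem' := by
    intro A hA x y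
    have h1 : A.1 * (A⁻¹).1 = 1 := by rw [← Units.val_mul, mul_inv_cancel, Units.val_one]
    rw [← hA]
    have e := fun i j => congrFun (congrFun h1 i) j
    simp only [Matrix.mul_apply, Fin.sum_univ_two] at e
    have e00 := (e 0 0).trans (show _ = (1 : ℂ) by simp)
    have e01 := (e 0 1).trans (show _ = (0 : ℂ) by simp)
    have e10 := (e 1 0).trans (show _ = (0 : ℂ) by simp)
    have e11 := (e 1 1).trans (show _ = (1 : ℂ) by simp)
    congr 1
    · linear_combination x * e00 + y * e01
    · linear_combination x * e10 + y * e11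

theorem mem_HH (A : GL (Fin 2) ℂ) : A ∈ HH ↔
    ∀ x y : ℂ, FF (A.1 0 0 * x + A.1 0 1 * y) (A.1 1 0 * x + A.1 1 1 * y) = FF x y := Iff.rfl

theorem WW_mem : weilHom WW ∈ HH := by
  intro x y
  rw [weilHom_coe, weilM_WW]
  simp only [of_apply, cons_val', cons_val_zero, cons_val_one, cons_val_fin_one]
  have e1 : kap * x + -(kap * tau) * y = kap * (x - tau * y) := by ring
  have e2 : -(kap * tau) * x + -kap * y = kap * (-(tau * x) - y) := by ring
  rw [e1, e2, FF_smul, FF_golden _ _ _ tau_sq]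
  have := kap_sq
  have h6 : kap ^ 12 * (1 + tau ^ 2) ^ 6 = (kap ^ 2 * (1 + tau ^ 2)) ^ 6 := by ring
  rw [← mul_assoc, h6, this]; ring

theorem UU_mem (t : ZMod 5) : weilHom (UU t) ∈ HH := by
  intro x y
  rw [weilHom_coe, weilM_UU]
  simp only [of_apply, cons_val', cons_val_zero, cons_val_one, cons_val_fin_one]
  have h3 : ztp (3 * t) = ztp t ^ 3 := by
    have : 3 * t = t + t + t := by ring
    rw [this, ztp_add, ztp_add]; ring
  have h2 : ztp (2 * t) = ztp t ^ 2 := by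
    have : 2 * t = t + t := by ring
    rw [this, ztp_add]; ring
  have h5 := ztp_five t
  rw [h3, h2]
  have e : FF (ztp t ^ 3 * x + 0 * y) (0 * x + ztp t ^ 2 * y) =
    x * y * ((ztp t ^ 5) ^ 7 * x ^ 10 + 11 * (ztp t ^ 5) ^ 6 * x ^ 5 * y ^ 5
      - (ztp t ^ 5) ^ 5 * y ^ 10) := by
    simp only [FF]; ring
  rw [e, h5]; simp only [FF]; ring

theorem weil_mem (g : SL25) : weilHom g ∈ HH := by
  obtain ⟨i, j, k, m, rfl⟩ := sl_gen g
  simp only [map_mul]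
  have hu := UU_mem
  have hw := WW_mem
  exact HH.mul_mem (HH.mul_mem (HH.mul_mem (HH.mul_mem (HH.mul_mem (HH.mul_mem (hu i) hw)
    (hu j)) hw) (hu k)) hw) (hu m)


theorem HH_stab (B : GL (Fin 2) ℂ) (hB : B ∈ HH) (h10 : B.1 1 0 = 0) :
    ∃ (t : ZMod 5) (σ : ℂ), σ ^ 12 = 1 ∧ B.1 = σ • weilM (UU t) := by
  have hdet : B.1.det ≠ 0 := by
    have := (Matrix.isUnit_iff_isUnit_det B.1).1 B.isUnit
    exact this.ne_zero
  rw [Matrix.det_fin_two, h10, mul_zero, sub_zero] at hdet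
  rw [mem_HH] at hB
  obtain ⟨α, hα⟩ : ∃ α, B.1 0 0 = α := ⟨_, rfl⟩
  obtain ⟨β, hβ⟩ : ∃ β, B.1 0 1 = β := ⟨_, rfl⟩
  obtain ⟨δ, hδ⟩ : ∃ δ, B.1 1 1 = δ := ⟨_, rfl⟩
  rw [hα, hδ] at hdet
  rw [hα, hβ, hδ, h10] at hB
  have ha : α ≠ 0 := left_ne_zero_of_mul hdet
  have hd : δ ≠ 0 := right_ne_zero_of_mul hdet
  have hpoly : (Polynomial.C δ * (Polynomial.X + Polynomial.C β) ^ 11 +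
      Polynomial.C (11 * δ ^ 6) * (Polynomial.X + Polynomial.C β) ^ 6 -
      Polynomial.C (δ ^ 11) * (Polynomial.X + Polynomial.C β) : Polynomial ℂ) =
      Polynomial.C (α⁻¹ ^ 11) * Polynomial.X ^ 11 + Polynomial.C (11 * α⁻¹ ^ 6) * Polynomial.X ^ 6
        - Polynomial.C α⁻¹ * Polynomial.X := by
    apply Polynomial.funext
    intro x
    have h := hB (α⁻¹ * x) 1
    rw [mul_inv_cancel_left₀ ha] at h
    simp only [FF] at h
    simp only [Polynomial.eval_add, Polynomial.eval_sub, Polynomial.eval_mul, Polynomial.eval_pow,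
      Polynomial.eval_C, Polynomial.eval_X]
    linear_combination h
  have c11 := congrArg (fun q => Polynomial.coeff q 11) hpoly
  have c10 := congrArg (fun q => Polynomial.coeff q 10) hpoly
  have c6 := congrArg (fun q => Polynomial.coeff q 6) hpoly
  simp only [Polynomial.coeff_add, Polynomial.coeff_sub, Polynomial.coeff_C_mul,
    Polynomial.coeff_X_add_C_pow, Polynomial.coeff_X_pow, Polynomial.coeff_X,
    Polynomial.coeff_C] at c11 c10 c6
  norm_num [Nat.choose, hd] at c11 c10
  subst c10
  norm_num [Nat.choose] at c6
  -- `c11 : δ = (α ^ 11)⁻¹`, `c6 : δ ^ 6 = (α ^ 6)⁻¹`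
  have k11 : α ^ 11 * δ = 1 := by rw [c11]; exact mul_inv_cancel₀ (pow_ne_zero _ ha)
  have k6 : α ^ 6 * δ ^ 6 = 1 := by rw [c6]; exact mul_inv_cancel₀ (pow_ne_zero _ ha)
  have k5 : (α / δ) ^ 5 = 1 := by
    rw [div_pow, div_eq_one_iff_eq (pow_ne_zero _ hd)]
    have h6 : α ^ 6 * δ ≠ 0 := mul_ne_zero (pow_ne_zero _ ha) hd
    apply mul_left_cancel₀ h6
    linear_combination k11 - k6
  obtain ⟨t, ht⟩ := ztp_surj _ k5
  have hz2 := ztp_ne (2 * t)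
  have h3 : ztp (3 * t) = ztp (2 * t) * ztp t := by
    rw [← ztp_add]; congr 1; ring
  have hα' : α = ztp t * δ := by rw [ht]; field_simp
  refine ⟨t, δ / ztp (2 * t), ?_, ?_⟩
  · have h22 : ztp (2 * t) = ztp t ^ 2 := by
      have : 2 * t = t + t := by ring
      rw [this, ztp_add]; ring
    have h5 := ztp_five t
    rw [div_pow, div_eq_one_iff_eq (pow_ne_zero _ hz2), h22]
    have : (ztp t ^ 5) ^ 2 * ztp t * δ ^ 12 = 1 := by
      rw [hα'] at k11
      linear_combination k11
    rw [h5] at this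
    have e2 : (ztp t ^ 2) ^ 12 = (ztp t ^ 5) ^ 4 * ztp t ^ 4 := by ring
    rw [e2, h5]
    linear_combination ztp t ^ 4 * this - δ ^ 12 * h5
  · rw [weilM_UU]
    ext i j
    fin_cases i <;> fin_cases j
    · change B.1 0 0 = δ / ztp (2 * t) * ztp (3 * t)
      rw [hα, h3, hα']; field_simp
    · change B.1 0 1 = δ / ztp (2 * t) * 0
      rw [hβ, mul_zero]
    · change B.1 1 0 = δ / ztp (2 * t) * 0
      rw [h10, mul_zero]
    · change B.1 1 1 = δ / ztp (2 * t) * ztp (2 * t)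
      rw [hδ]; field_simp

theorem FF_roots (p q : ℂ) (h : FF p q = 0) :
    ∃ (g : SL25) (μ : ℂ), p = μ * weilM g 0 0 ∧ q = μ * weilM g 1 0 := by
  have hk := kap_ne
  have ht := tau_ne
  by_cases hq : q = 0
  · refine ⟨1, p, ?_, ?_⟩
    · rw [weilM_one]; simp
    · rw [weilM_one]; simp [hq]
  by_cases hp : p = 0
  · refine ⟨DD, -q, ?_, ?_⟩
    · rw [weilM_DD]; simp [hp]
    · rw [weilM_DD]; simp
  have hW : ∀ t, weilM (UU t * WW) = !![ztp (3 * t) * kap, -(ztp (3 * t) * kap * tau);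
      -(ztp (2 * t) * kap * tau), - (ztp (2 * t) * kap)] := by
    intro t
    rw [weilM_mul, weilM_UU, weilM_WW]
    ext i j
    fin_cases i <;> fin_cases j <;>
      simp [Matrix.mul_apply, Fin.sum_univ_two] <;> ring
  have hWD : ∀ t, weilM (UU t * WW * DD) = !![ztp (3 * t) * kap * tau, ztp (3 * t) * kap;
      ztp (2 * t) * kap, - (ztp (2 * t) * kap * tau)] := by
    intro t
    rw [weilM_mul, hW, weilM_DD]
    ext i j
    fin_cases i <;> fin_cases j <;>
      simp [Matrix.mul_apply, Fin.sum_univ_two]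
  have h3 : ∀ t, ztp (3 * t) = ztp (2 * t) * ztp t := by
    intro t
    rw [← ztp_add]; congr 1; ring
  have hf : (p ^ 5 - tau ^ 5 * q ^ 5) * ((tau * p) ^ 5 + q ^ 5) = 0 := by
    have h' : p ^ 10 + 11 * p ^ 5 * q ^ 5 - q ^ 10 = 0 := by
      simpa [FF, hp, hq] using h
    have t5 : tau ^ 10 = 1 - 11 * tau ^ 5 := by
      have := tau_sq
      grind
    linear_combination tau ^ 5 * h' - p ^ 5 * q ^ 5 * t5
  rcases mul_eq_zero.1 hf with h1 | h1
  · have : (p / (tau * q)) ^ 5 = 1 := by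
      rw [div_pow, div_eq_one_iff_eq (pow_ne_zero _ (mul_ne_zero ht hq))]
      linear_combination h1
    obtain ⟨t, hz⟩ := ztp_surj _ this
    have hz2 := ztp_ne (2 * t)
    refine ⟨UU t * WW * DD, q / (ztp (2 * t) * kap), ?_, ?_⟩
    · rw [hWD]
      change p = q / (ztp (2 * t) * kap) * (ztp (3 * t) * kap * tau)
      rw [h3, hz]; field_simp
    · rw [hWD]
      change q = q / (ztp (2 * t) * kap) * (ztp (2 * t) * kap)
      field_simp
  · have : (-(tau * p) / q) ^ 5 = 1 := by
      rw [div_pow, div_eq_one_iff_eq (pow_ne_zero _ hq)]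
      linear_combination -h1
    obtain ⟨t, hz⟩ := ztp_surj _ this
    have hz2 := ztp_ne (2 * t)
    refine ⟨UU t * WW, -q / (ztp (2 * t) * kap * tau), ?_, ?_⟩
    · rw [hW]
      change p = -q / (ztp (2 * t) * kap * tau) * (ztp (3 * t) * kap)
      rw [h3, hz]; field_simp
    · rw [hW]
      change q = -q / (ztp (2 * t) * kap * tau) * -(ztp (2 * t) * kap * tau)
      field_simp

theorem HH_classify (A : GL (Fin 2) ℂ) (hA : A ∈ HH) :
    ∃ (g : SL25) (σ : ℂ), σ ^ 12 = 1 ∧ A.1 = σ • weilM g := by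
  have h0 : FF (A.1 0 0) (A.1 1 0) = 0 := by
    have := hA 1 0
    simpa [FF] using this
  obtain ⟨g, μ, h1, h2⟩ := FF_roots _ _ h0
  have hB : (weilHom g)⁻¹ * A ∈ HH := HH.mul_mem (HH.inv_mem (weil_mem g)) hA
  have h10 : ((weilHom g)⁻¹ * A).1 1 0 = 0 := by
    have e : ((weilHom g)⁻¹).1 * weilM g = 1 := by
      rw [← weilHom_coe, ← Units.val_mul, inv_mul_cancel, Units.val_one]
    have e10 := (congrFun (congrFun e 1) 0).trans (show _ = (0 : ℂ) by simp)
    rw [Matrix.mul_apply, Fin.sum_univ_two] at e10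
    rw [Units.val_mul, Matrix.mul_apply, Fin.sum_univ_two, h1, h2]
    linear_combination μ * e10
  obtain ⟨t, σ, hσ, hBe⟩ := HH_stab _ hB h10
  refine ⟨g * UU t, σ, hσ, ?_⟩
  have : A = weilHom g * ((weilHom g)⁻¹ * A) := by group
  rw [this, Units.val_mul, hBe, weilM_mul, weilHom_coe, Matrix.mul_smul]


/-! ### The abstract group -/

def zmodHom (n : ℕ) [NeZero n] {G : Type*} [Group G] (x : G) (hx : x ^ n = 1) :
    Multiplicative (ZMod n) →* G where
  toFun a := x ^ (Multiplicative.toAdd a).val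
  map_one' := by simp
  map_mul' a b := by
    rw [toAdd_mul, ZMod.val_add, ← pow_add]
    conv_rhs => rw [← Nat.div_add_mod ((Multiplicative.toAdd a).val +
      (Multiplicative.toAdd b).val) n, pow_add, pow_mul, hx, one_pow, one_mul]

theorem zmodHom_apply (n : ℕ) [NeZero n] {G : Type*} [Group G] (x : G) (hx : x ^ n = 1)
    (a : Multiplicative (ZMod n)) : zmodHom n x hx a = x ^ (Multiplicative.toAdd a).val := rfl

theorem WW_sq : WW * WW = -1 := by decide

theorem conjWW_sq : (MulAut.conj WW) ^ 2 = 1 := by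
  rw [← map_pow, pow_two, WW_sq]
  ext1 g
  simp

def phi : Multiplicative (ZMod 2) →* MulAut SL25 := zmodHom 2 (MulAut.conj WW) conjWW_sq

def scal : ℂˣ →* GL (Fin 2) ℂ :=
  Units.map (algebraMap ℂ (Matrix (Fin 2) (Fin 2) ℂ)).toMonoidHom

theorem scal_coe (c : ℂˣ) : (scal c).1 = (c : ℂ) • (1 : Matrix (Fin 2) (Fin 2) ℂ) := by
  change algebraMap ℂ (Matrix (Fin 2) (Fin 2) ℂ) c = _
  rw [Algebra.algebraMap_eq_smul_one]

theorem scal_comm (c : ℂˣ) (A : GL (Fin 2) ℂ) : scal c * A = A * scal c := by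
  ext1
  rw [Units.val_mul, Units.val_mul, scal_coe, Matrix.smul_mul, Matrix.mul_smul, one_mul, mul_one]

def Iu : ℂˣ := ⟨Complex.I, -Complex.I, by simp, by simp⟩

def om : ℂˣ := ((Complex.isPrimitiveRoot_exp 3 (by norm_num)).isUnit (by norm_num)).unit

theorem om_prim : IsPrimitiveRoot (om : ℂ) 3 := Complex.isPrimitiveRoot_exp 3 (by norm_num)

theorem om_pow : om ^ 3 = 1 := by
  ext
  push_cast
  exact om_prim.pow_eq_one

def tt : GL (Fin 2) ℂ := scal Iu * weilHom WW

theorem tt_sq : tt ^ 2 = 1 := by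
  have h := kap_sq
  ext1
  rw [pow_two, tt, Units.val_mul, Units.val_mul, scal_coe, weilHom_coe, weilM_WW, Matrix.smul_mul,
    one_mul, Matrix.smul_mul, Matrix.mul_smul, smul_smul]
  have hI : (Iu : ℂ) * Iu = -1 := Complex.I_mul_I
  rw [hI]
  ext i j
  fin_cases i <;> fin_cases j <;>
    simp [Matrix.mul_apply, Fin.sum_univ_two]
  all_goals first | linear_combination -h | ring1

def h2 : Multiplicative (ZMod 2) →* GL (Fin 2) ℂ := zmodHom 2 tt tt_sq

def h3 : Multiplicative (ZMod 3) →* GL (Fin 2) ℂ :=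
  zmodHom 3 (scal om) (by rw [← map_pow, om_pow, map_one])

theorem tt_conj (k : ℕ) (n : SL25) :
    weilHom (((MulAut.conj WW) ^ k) n) = tt ^ k * weilHom n * (tt ^ k)⁻¹ := by
  induction k generalizing n with
  | zero => simp
  | succ k ih =>
    rw [pow_succ, MulAut.mul_apply, ih, MulAut.conj_apply, map_mul, map_mul, map_inv, pow_succ, tt]
    rw [_root_.mul_inv_rev (_ ^ k), _root_.mul_inv_rev (scal Iu), ← map_inv scal]
    have e : weilHom WW * weilHom n * (weilHom WW)⁻¹ =
        scal Iu * weilHom WW * weilHom n * ((weilHom WW)⁻¹ * scal Iu⁻¹) := by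
      rw [← mul_assoc, ← scal_comm Iu⁻¹]
      simp only [← mul_assoc]
      rw [← map_mul scal, inv_mul_cancel, map_one, one_mul]
    rw [e]
    simp only [mul_assoc]

def semiHom : SL25 ⋊[phi] Multiplicative (ZMod 2) →* GL (Fin 2) ℂ :=
  SemidirectProduct.lift weilHom h2 (by
    intro b
    ext1 n
    exact tt_conj _ n)

def bigHom : Multiplicative (ZMod 3) × (SL25 ⋊[phi] Multiplicative (ZMod 2)) →* GL (Fin 2) ℂ :=
  MonoidHom.noncommCoprod h3 semiHom (by
    intro a b
    change (scal om) ^ _ * _ = _ * (scal om) ^ _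
    rw [← map_pow]
    exact scal_comm _ _)

theorem bigHom_apply (a : Multiplicative (ZMod 3)) (n : SL25) (b : Multiplicative (ZMod 2)) :
    bigHom (a, ⟨n, b⟩) = scal (om ^ (Multiplicative.toAdd a).val) *
      (weilHom n * tt ^ (Multiplicative.toAdd b).val) := by
  rw [map_pow]; rfl

theorem det_scal (c : ℂˣ) : (scal c).1.det = (c : ℂ) ^ 2 := by
  rw [scal_coe, Matrix.det_smul]; simp

theorem bigHom_inj : Function.Injective bigHom := by
  rw [injective_iff_map_eq_one]
  rintro ⟨a, ⟨n, b⟩⟩ h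
  rw [bigHom_apply] at h
  have hd := congrArg (fun M : GL (Fin 2) ℂ => M.1.det) h
  simp only [Units.val_mul, Matrix.det_mul, det_scal, weilHom_coe, weilM_det, Units.val_pow_eq_pow_val,
    Matrix.det_pow, tt, one_mul, mul_one, Units.val_one, Matrix.det_one] at hd
  have hI : (Iu : ℂ) ^ 2 = -1 := Complex.I_sq
  rw [hI] at hd
  obtain ⟨i, hi, hia⟩ : ∃ i, i < 3 ∧ (Multiplicative.toAdd a).val = i := ⟨_, ZMod.val_lt _, rfl⟩
  obtain ⟨j, hj, hjb⟩ : ∃ j, j < 2 ∧ (Multiplicative.toAdd b).val = j := ⟨_, ZMod.val_lt _, rfl⟩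
  rw [hia, hjb] at hd h
  have hω : (om : ℂ) ^ 3 = 1 := om_prim.pow_eq_one
  have hj0 : j = 0 := by
    have := congrArg (fun z : ℂ => z ^ 3) hd
    simp only [mul_pow, one_pow] at this
    have e : ((((om : ℂ) ^ i) ^ 2) ^ 3) = (om ^ 3) ^ (2 * i) := by
      rw [← pow_mul, ← pow_mul, ← pow_mul]; congr 1; ring
    rw [e, hω, one_pow] at this
    interval_cases j
    · rfl
    · norm_num at this
  subst hj0
  have hi0 : i = 0 := by
    rw [pow_zero, mul_one, ← pow_mul] at hd
    have := (om_prim.pow_eq_one_iff_dvd _).1 hd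
    omega
  subst hi0
  simp only [pow_zero, map_one, one_mul, mul_one] at h
  have hn : n = 1 := by
    apply weilM_inj
    rw [← weilHom_coe, h]; rfl
  have ha : a = 1 := by
    have := (ZMod.val_eq_zero _).1 hia
    exact Multiplicative.toAdd.injective this
  have hb : b = 1 := by
    have := (ZMod.val_eq_zero _).1 hjb
    exact Multiplicative.toAdd.injective this
  subst ha hb hn
  rfl

theorem scal_mem (c : ℂˣ) (h : c ^ 12 = 1) : scal c ∈ HH := by
  intro x y
  have h' : (c : ℂ) ^ 12 = 1 := by
    rw [← Units.val_pow_eq_pow_val, h, Units.val_one]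
  rw [scal_coe]
  have e : FF ((c : ℂ) * x) (c * y) = FF x y := by rw [FF_smul, h', one_mul]
  simpa using e

theorem Iu_pow : Iu ^ 4 = 1 := by
  ext
  push_cast
  exact Complex.I_pow_four

theorem bigHom_range : bigHom.range = HH := by
  apply le_antisymm
  · rintro _ ⟨⟨a, ⟨n, b⟩⟩, rfl⟩
    rw [bigHom_apply]
    have hom : om ^ 12 = 1 := by
      have : om ^ 12 = (om ^ 3) ^ 4 := by rw [← pow_mul]
      rw [this, om_pow, one_pow]
    have hIu : Iu ^ 12 = 1 := by
      have : Iu ^ 12 = (Iu ^ 4) ^ 3 := by rw [← pow_mul]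
      rw [this, Iu_pow, one_pow]
    rw [map_pow]
    exact HH.mul_mem (HH.pow_mem (scal_mem _ hom) _) (HH.mul_mem (weil_mem _)
      (HH.pow_mem (HH.mul_mem (scal_mem _ hIu) (weil_mem _)) _))
  · have hN : ∀ g, weilHom g ∈ bigHom.range := by
      intro g
      refine ⟨(1, ⟨g, 1⟩), ?_⟩
      rw [bigHom_apply]; simp
    have hT : tt ∈ bigHom.range := by
      refine ⟨(1, ⟨1, Multiplicative.ofAdd 1⟩), ?_⟩
      rw [bigHom_apply]
      have : (Multiplicative.toAdd (Multiplicative.ofAdd (1 : ZMod 2))).val = 1 := rfl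
      rw [this]; simp
    have hO : scal om ∈ bigHom.range := by
      refine ⟨(Multiplicative.ofAdd 1, 1), ?_⟩
      change bigHom (Multiplicative.ofAdd 1, ⟨1, 1⟩) = _
      rw [bigHom_apply]
      have : (Multiplicative.toAdd (Multiplicative.ofAdd (1 : ZMod 3))).val = 1 := rfl
      rw [this]; simp
    have hI : scal Iu ∈ bigHom.range := by
      have : scal Iu = tt * (weilHom WW)⁻¹ := by rw [tt]; group
      rw [this]
      exact bigHom.range.mul_mem hT (bigHom.range.inv_mem (hN _))
    intro A hA
    obtain ⟨g, σ, hσ, hAe⟩ := HH_classify A hA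
    have hσ0 : σ ≠ 0 := by
      rintro rfl
      norm_num at hσ
    have hI4 : IsPrimitiveRoot (Iu : ℂ) 4 := by
      have h := Complex.isPrimitiveRoot_exp 4 (by norm_num)
      have e : Complex.exp (2 * Real.pi * Complex.I / (4 : ℕ)) = Complex.I := by
        have : 2 * Real.pi * Complex.I / (4 : ℕ) = Real.pi / 2 * Complex.I := by
          push_cast; ring
        rw [this, Complex.exp_pi_div_two_mul_I]
      rw [e] at h
      exact h
    obtain ⟨i, -, hi⟩ := hI4.eq_pow_of_pow_eq_one (ξ := σ ^ 9)
      (by rw [← pow_mul]; exact (by rw [show 9 * 4 = 12 * 3 by norm_num, pow_mul, hσ, one_pow]))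
    obtain ⟨j, -, hj⟩ := om_prim.eq_pow_of_pow_eq_one (ξ := σ ^ 4)
      (by rw [← pow_mul]; exact hσ)
    have hσe : σ = (Iu : ℂ) ^ i * (om : ℂ) ^ j := by
      rw [hi, hj]
      linear_combination -σ * hσ
    have hA' : A = scal (Iu ^ i * om ^ j) * weilHom g := by
      ext1
      rw [hAe, Units.val_mul, scal_coe, weilHom_coe, Matrix.smul_mul, one_mul, hσe]
      push_cast; rfl
    rw [hA', map_mul, map_pow, map_pow]
    exact bigHom.range.mul_mem (bigHom.range.mul_mem (bigHom.range.pow_mem hI _)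
      (bigHom.range.pow_mem hO _)) (hN g)

def DHequiv : Multiplicative (ZMod 3) × (SL25 ⋊[phi] Multiplicative (ZMod 2)) ≃* HH :=
  (MonoidHom.ofInjective bigHom_inj).trans (MulEquiv.subgroupCongr bigHom_range)

theorem card_D : Nat.card (Multiplicative (ZMod 3) × (SL25 ⋊[phi] Multiplicative (ZMod 2))) = 720 := by
  rw [Nat.card_prod, SemidirectProduct.card, card_sl]
  simp


/-! ### Linear automorphisms of the curve -/

def GG (v : Fin 3 → ℂ) : ℂ := v 2 ^ 12 + FF (v 0) (v 1)

theorem eval_G12 (v : Fin 3 → ℂ) : eval v G12 = GG v := by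
  simp [G12, GG, FF]

def linPoly (u r : Fin 3 → ℂ) : Polynomial ℂ :=
  (Polynomial.C (u 2) + Polynomial.C (r 2) * Polynomial.X) ^ 12 +
    FF (Polynomial.C (u 0) + Polynomial.C (r 0) * Polynomial.X)
      (Polynomial.C (u 1) + Polynomial.C (r 1) * Polynomial.X)

theorem linPoly_eval (u r : Fin 3 → ℂ) (t : ℂ) : (linPoly u r).eval t = GG (u + t • r) := by
  simp [linPoly, GG, FF]
  ring

theorem linPoly_coeff (u r : Fin 3 → ℂ) :
    (linPoly u r).natDegree ≤ 12 ∧ (linPoly u r).coeff 12 = GG r := by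
  have e : linPoly u r =
    (Polynomial.C (u 2) + Polynomial.C (r 2) * Polynomial.X) ^ 12 +
      ((Polynomial.C (u 0) + Polynomial.C (r 0) * Polynomial.X) ^ 11 *
        (Polynomial.C (u 1) + Polynomial.C (r 1) * Polynomial.X) +
      Polynomial.C 11 * (Polynomial.C (u 0) + Polynomial.C (r 0) * Polynomial.X) ^ 6 *
        (Polynomial.C (u 1) + Polynomial.C (r 1) * Polynomial.X) ^ 6 -
      (Polynomial.C (u 0) + Polynomial.C (r 0) * Polynomial.X) *
        (Polynomial.C (u 1) + Polynomial.C (r 1) * Polynomial.X) ^ 11) := by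
    rw [linPoly, FF]
    have : (Polynomial.C 11 : Polynomial ℂ) = 11 := rfl
    rw [this]
    ring
  constructor
  · rw [e]
    compute_degree
  · rw [e]
    compute_degree!
    simp only [GG, FF]; ring

theorem semi_inv_generic (M : Matrix (Fin 3) (Fin 3) ℂ) (hM : ∀ v, GG v = 0 → GG (M *ᵥ v) = 0)
    (v : Fin 3 → ℂ) (hv : FF (v 0) (v 1) ≠ 0) :
    GG (M *ᵥ v) = GG (M *ᵥ ![0, 0, 1]) * GG v := by
  set r := M *ᵥ ![0, 0, 1] with hr
  set w : Fin 3 → ℂ := ![v 0, v 1, 0] with hw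
  have hvw : ∀ z : ℂ, M *ᵥ (w + z • ![0, 0, 1]) = M *ᵥ w + z • r := by
    intro z
    rw [Matrix.mulVec_add, Matrix.mulVec_smul]
  have hGw : ∀ z : ℂ, GG (w + z • ![0, 0, 1]) = z ^ 12 + FF (v 0) (v 1) := by
    intro z
    simp [GG, hw]
  let Q : Polynomial ℂ := linPoly (M *ᵥ w) r -
    (Polynomial.C (GG r) * Polynomial.X ^ 12 + Polynomial.C (GG r * FF (v 0) (v 1)))
  have hQe : ∀ z, Q.eval z = GG (M *ᵥ (w + z • ![0, 0, 1])) -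
      GG r * GG (w + z • ![0, 0, 1]) := by
    intro z
    rw [hvw, hGw]
    simp only [Q, Polynomial.eval_sub, linPoly_eval, Polynomial.eval_add, Polynomial.eval_mul,
      Polynomial.eval_C, Polynomial.eval_pow, Polynomial.eval_X]
    ring
  obtain ⟨hd, hc⟩ := linPoly_coeff (M *ᵥ w) r
  have hQd : Q.natDegree ≤ 12 := by
    refine (Polynomial.natDegree_sub_le _ _).trans (max_le hd ?_)
    compute_degree
  have hQc : Q.coeff 12 = 0 := by
    simp only [Q, Polynomial.coeff_sub, hc, Polynomial.coeff_add, Polynomial.coeff_C_mul,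
      Polynomial.coeff_X_pow, Polynomial.coeff_C]
    norm_num
  have hQlt : Q.natDegree < 12 := by
    rcases lt_or_eq_of_le hQd with h | h
    · exact h
    · have h0 : Q = 0 := by
        rw [← Polynomial.leadingCoeff_eq_zero, Polynomial.leadingCoeff, h, hQc]
      rw [h0]; simp
  obtain ⟨z0, hz0⟩ := IsAlgClosed.exists_pow_nat_eq (-FF (v 0) (v 1)) (n := 12) (by norm_num)
  have hz00 : z0 ≠ 0 := by
    rintro rfl
    apply hv
    linear_combination hz0
  have hη := Complex.isPrimitiveRoot_exp 12 (by norm_num)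
  set η := Complex.exp (2 * Real.pi * Complex.I / (12 : ℕ)) with hηdef
  have hQ0 : Q = 0 := by
    apply Polynomial.eq_zero_of_natDegree_lt_card_of_eval_eq_zero Q
      (f := fun k : Fin 12 => z0 * η ^ (k : ℕ))
    · intro a b hab
      have := mul_left_cancel₀ hz00 hab
      exact Fin.ext (hη.pow_inj a.2 b.2 this)
    · intro k
      rw [hQe]
      have h0 : GG (w + (z0 * η ^ (k : ℕ)) • ![0, 0, 1]) = 0 := by
        rw [hGw, mul_pow, hz0, ← pow_mul, mul_comm (k : ℕ) 12, pow_mul, hη.pow_eq_one, one_pow]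
        ring
      rw [h0, hM _ h0]; ring
    · simpa using hQlt
  have hfin := hQe (v 2)
  rw [hQ0, Polynomial.eval_zero] at hfin
  have hv' : w + v 2 • ![0, 0, 1] = v := by
    ext i
    fin_cases i <;> simp [hw]
  rw [hv'] at hfin
  linear_combination -hfin

theorem semi_inv (M : Matrix (Fin 3) (Fin 3) ℂ) (hM : ∀ v, GG v = 0 → GG (M *ᵥ v) = 0)
    (v : Fin 3 → ℂ) : GG (M *ᵥ v) = GG (M *ᵥ ![0, 0, 1]) * GG v := by
  let A : Polynomial ℂ := FF (Polynomial.C (v 0) + Polynomial.X) (Polynomial.C (v 1) + Polynomial.X)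
  let B : Polynomial ℂ := linPoly (M *ᵥ v) (M *ᵥ ![1, 1, 0]) -
    Polynomial.C (GG (M *ᵥ ![0, 0, 1])) * linPoly v ![1, 1, 0]
  have hA : A ≠ 0 := by
    intro h
    have h1 := linPoly_coeff ![v 0, v 1, 0] ![1, 1, 0]
    have h2 : linPoly ![v 0, v 1, 0] ![1, 1, 0] = A := by
      simp [linPoly, A]
    rw [h2, h] at h1
    have := h1.2
    simp [GG, FF] at this
  have hAe : ∀ t, A.eval t = FF (v 0 + t) (v 1 + t) := by
    intro t
    simp [A, FF]
  have hBe : ∀ t, B.eval t = GG (M *ᵥ (v + t • ![1, 1, 0])) -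
      GG (M *ᵥ ![0, 0, 1]) * GG (v + t • ![1, 1, 0]) := by
    intro t
    simp only [B, Polynomial.eval_sub, Polynomial.eval_mul, Polynomial.eval_C, linPoly_eval]
    rw [Matrix.mulVec_add, Matrix.mulVec_smul]
  have hAB : A * B = 0 := by
    apply Polynomial.funext
    intro t
    rw [Polynomial.eval_mul, Polynomial.eval_zero, mul_eq_zero]
    by_cases h : A.eval t = 0
    · exact Or.inl h
    · right
      rw [hBe, semi_inv_generic M hM, sub_self]
      rw [hAe] at h
      simpa using h
  have hB : B = 0 := (mul_eq_zero.1 hAB).resolve_left hA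
  have := hBe 0
  rw [hB, Polynomial.eval_zero, zero_smul, add_zero] at this
  linear_combination -this

/-- The finite-difference form of the vanishing of the mixed second derivative. -/
def MixRel (p q : Fin 3 → ℂ) : Prop := ∀ v, GG (v + p + q) + GG v = GG (v + p) + GG (v + q)

theorem rel_13 : MixRel ![1, 0, 0] ![0, 0, 1] := by
  intro v
  simp only [GG, Pi.add_apply]
  simp
  ring

theorem rel_23 : MixRel ![0, 1, 0] ![0, 0, 1] := by
  intro v
  simp only [GG, Pi.add_apply]
  simp
  ring

theorem rel_z (p q : Fin 3 → ℂ) (h : MixRel p q) : p 2 * q 2 = 0 := by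
  have hp : ((Polynomial.X + Polynomial.C (p 2 + q 2)) ^ 12 + Polynomial.X ^ 12 -
      (Polynomial.X + Polynomial.C (p 2)) ^ 12 - (Polynomial.X + Polynomial.C (q 2)) ^ 12 +
      Polynomial.C (FF (p 0 + q 0) (p 1 + q 1) - FF (p 0) (p 1) - FF (q 0) (q 1)) :
        Polynomial ℂ) = 0 := by
    apply Polynomial.funext
    intro z
    have := h ![0, 0, z]
    simp only [GG, Pi.add_apply, Matrix.cons_val, zero_add] at this
    simp only [Polynomial.eval_add, Polynomial.eval_sub, Polynomial.eval_pow, Polynomial.eval_X,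
      Polynomial.eval_C, Polynomial.eval_zero]
    have h0 : FF (0 : ℂ) 0 = 0 := by simp [FF]
    linear_combination this - h0
  have c := congrArg (fun q => Polynomial.coeff q 10) hp
  simp only [Polynomial.coeff_add, Polynomial.coeff_sub, Polynomial.coeff_X_add_C_pow,
    Polynomial.coeff_X_pow, Polynomial.coeff_C, Polynomial.coeff_zero] at c
  norm_num [Nat.choose] at c
  have : p 2 * q 2 = 0 := by linear_combination c / 132
  exact this

/-- Expansion of `FF (x + s) y` as a polynomial in `x`. -/
def fPoly (s y : ℂ) : Polynomial ℂ :=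
  Polynomial.C y * (Polynomial.X + Polynomial.C s) ^ 11 +
    Polynomial.C (11 * y ^ 6) * (Polynomial.X + Polynomial.C s) ^ 6 -
    Polynomial.C (y ^ 11) * (Polynomial.X + Polynomial.C s) ^ 1

theorem fPoly_eval (s y x : ℂ) : (fPoly s y).eval x = FF (x + s) y := by
  simp [fPoly, FF]; ring

theorem fPoly_coeff10 (s y : ℂ) : (fPoly s y).coeff 10 = 11 * s * y := by
  simp only [fPoly, Polynomial.coeff_add, Polynomial.coeff_sub, Polynomial.coeff_C_mul,
    Polynomial.coeff_X_add_C_pow]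
  norm_num [Nat.choose]
  ring

theorem fPoly_coeff9 (s y : ℂ) : (fPoly s y).coeff 9 = 55 * s ^ 2 * y := by
  simp only [fPoly, Polynomial.coeff_add, Polynomial.coeff_sub, Polynomial.coeff_C_mul,
    Polynomial.coeff_X_add_C_pow]
  norm_num [Nat.choose]
  ring

theorem rel_xy_aux (a b a' b' : ℂ)
    (h : ∀ x y, FF (x + (a + a')) (y + (b + b')) + FF x y = FF (x + a) (y + b) +
      FF (x + a') (y + b')) : a * b' + a' * b = 0 ∧ a * a' = 0 := by
  have hp : ∀ y, fPoly (a + a') (y + (b + b')) + fPoly 0 y = fPoly a (y + b) +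
      fPoly a' (y + b') := by
    intro y
    apply Polynomial.funext
    intro x
    simp only [Polynomial.eval_add, fPoly_eval, add_zero]
    exact h x y
  constructor
  · have c := congrArg (fun q => Polynomial.coeff q 10) (hp 0)
    simp only [Polynomial.coeff_add, fPoly_coeff10] at c
    linear_combination c / 11
  · have c := congrArg (fun q => Polynomial.coeff q 9) (hp 0)
    have c' := congrArg (fun q => Polynomial.coeff q 9) (hp 1)
    simp only [Polynomial.coeff_add, fPoly_coeff9] at c c'
    linear_combination (c' - c) / 110

theorem rel_xy (p q : Fin 3 → ℂ) (h : MixRel p q) (hz : p 2 * q 2 = 0) :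
    p 0 * q 1 + q 0 * p 1 = 0 ∧ p 0 * q 0 = 0 ∧ p 1 * q 1 = 0 := by
  have hF : ∀ x y, FF (x + (p 0 + q 0)) (y + (p 1 + q 1)) + FF x y = FF (x + p 0) (y + p 1) +
      FF (x + q 0) (y + q 1) := by
    intro x y
    have := h ![x, y, 0]
    simp only [GG, Pi.add_apply, Matrix.cons_val, zero_add] at this
    simp only [← add_assoc]
    have hz' : (p 2 + q 2) ^ 12 = p 2 ^ 12 + q 2 ^ 12 := by
      rcases mul_eq_zero.1 hz with h0 | h0 <;> rw [h0] <;> ring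
    linear_combination this - hz'
  have hsw : ∀ x y : ℂ, FF y (-x) = FF x y := by
    intro x y
    simp only [FF]; ring
  obtain ⟨h1, h2⟩ := rel_xy_aux _ _ _ _ hF
  obtain ⟨-, h3⟩ := rel_xy_aux (-p 1) (p 0) (-q 1) (q 0) (by
    intro x y
    have := hF y (-x)
    rw [← hsw x y, ← hsw _ (y + _), ← hsw _ (y + _), ← hsw _ (y + _)]
    convert this using 2 <;> congr 1 <;> ring)
  refine ⟨h1, h2, ?_⟩
  linear_combination h3

theorem rel_dichotomy (p q : Fin 3 → ℂ) (h : MixRel p q) (hne : p 0 ≠ 0 ∨ p 1 ≠ 0) :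
    q 0 = 0 ∧ q 1 = 0 := by
  obtain ⟨h1, h2, h3⟩ := rel_xy p q h (rel_z p q h)
  rcases hne with h0 | h0
  · have hq : q 0 = 0 := (mul_eq_zero.1 h2).resolve_left h0
    rw [hq, zero_mul, add_zero] at h1
    exact ⟨hq, (mul_eq_zero.1 h1).resolve_left h0⟩
  · have hq : q 1 = 0 := (mul_eq_zero.1 h3).resolve_left h0
    rw [hq, mul_zero, zero_add] at h1
    exact ⟨(mul_eq_zero.1 h1).resolve_right h0, hq⟩

theorem rel_symm {p q : Fin 3 → ℂ} (h : MixRel p q) : MixRel q p := by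
  intro v
  rw [add_right_comm, h v, add_comm]


theorem preserves_vanish (g : GL (Fin 3) ℂ) (h : Preserves G12 g) (v : Fin 3 → ℂ)
    (hv : GG v = 0) : GG (g.1 *ᵥ v) = 0 := by
  have : (g.1 *ᵥ v) ∈ {v : Fin 3 → ℂ | eval v G12 = 0} := by
    rw [← h]
    exact ⟨v, by simpa [eval_G12] using hv, rfl⟩
  simpa [eval_G12] using this

theorem GL_surj (g : GL (Fin 3) ℂ) (v : Fin 3 → ℂ) : g.1 *ᵥ (g⁻¹.1 *ᵥ v) = v := by
  rw [Matrix.mulVec_mulVec, ← Units.val_mul, mul_inv_cancel, Units.val_one, Matrix.one_mulVec]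

theorem mixRel_map (g : GL (Fin 3) ℂ) (h : Preserves G12 g) (p q : Fin 3 → ℂ)
    (hpq : MixRel p q) : MixRel (g.1 *ᵥ p) (g.1 *ᵥ q) := by
  intro v
  have hs := semi_inv g.1 (preserves_vanish g h)
  rw [← GL_surj g v]
  rw [← Matrix.mulVec_add, ← Matrix.mulVec_add, ← Matrix.mulVec_add,
    hs (_ + p + q), hs (_ + p), hs (_ + q), hs (g⁻¹.1 *ᵥ v)]
  linear_combination GG (g.1 *ᵥ ![0, 0, 1]) * hpq (g⁻¹.1 *ᵥ v)

theorem block_form (g : GL (Fin 3) ℂ) (h : Preserves G12 g) :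
    g.1 0 2 = 0 ∧ g.1 1 2 = 0 ∧ g.1 2 0 = 0 ∧ g.1 2 1 = 0 ∧ g.1 2 2 ≠ 0 := by
  have e1 : ∀ i, (g.1 *ᵥ ![1, 0, 0]) i = g.1 i 0 := by
    intro i; simp [Matrix.mulVec, dotProduct, Fin.sum_univ_three]
  have e2 : ∀ i, (g.1 *ᵥ ![0, 1, 0]) i = g.1 i 1 := by
    intro i; simp [Matrix.mulVec, dotProduct, Fin.sum_univ_three]
  have e3 : ∀ i, (g.1 *ᵥ ![0, 0, 1]) i = g.1 i 2 := by
    intro i; simp [Matrix.mulVec, dotProduct, Fin.sum_univ_three]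
  have hdet : g.1.det ≠ 0 := (Matrix.isUnit_iff_isUnit_det g.1 |>.1 g.isUnit).ne_zero
  have r1 := mixRel_map g h _ _ rel_13
  have r2 := mixRel_map g h _ _ rel_23
  have z1 := rel_z _ _ r1
  have z2 := rel_z _ _ r2
  rw [e1, e3] at z1
  rw [e2, e3] at z2
  have hp : g.1 0 2 = 0 ∧ g.1 1 2 = 0 := by
    by_contra hne
    have hne' : g.1 0 2 ≠ 0 ∨ g.1 1 2 ≠ 0 := by tauto
    have d1 := rel_dichotomy _ _ (rel_symm r1) (by simpa only [e3] using hne')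
    have d2 := rel_dichotomy _ _ (rel_symm r2) (by simpa only [e3] using hne')
    rw [e1, e1] at d1
    rw [e2, e2] at d2
    apply hdet
    rw [Matrix.det_fin_three, d1.1, d1.2, d2.1, d2.2]
    ring
  have h22 : g.1 2 2 ≠ 0 := by
    intro h0
    apply hdet
    rw [Matrix.det_fin_three, hp.1, hp.2, h0]
    ring
  exact ⟨hp.1, hp.2, (mul_eq_zero.1 z1).resolve_right h22, (mul_eq_zero.1 z2).resolve_right h22,
    h22⟩

/-- The embedding of `2 × 2` matrices as upper left blocks. -/
def blockHom : Matrix (Fin 2) (Fin 2) ℂ →* Matrix (Fin 3) (Fin 3) ℂ where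
  toFun A := !![A 0 0, A 0 1, 0; A 1 0, A 1 1, 0; 0, 0, 1]
  map_one' := by
    ext i j
    fin_cases i <;> fin_cases j <;> simp
  map_mul' A B := by
    ext i j
    fin_cases i <;> fin_cases j <;> simp [Matrix.mul_apply, Fin.sum_univ_three]

def iotaHom : GL (Fin 2) ℂ →* GL (Fin 3) ℂ := Units.map blockHom

theorem iotaHom_val (A : GL (Fin 2) ℂ) :
    (iotaHom A).1 = !![A.1 0 0, A.1 0 1, 0; A.1 1 0, A.1 1 1, 0; 0, 0, 1] := rfl

def pgHom : GL (Fin 2) ℂ →* PGL3 := (QuotientGroup.mk' scalarSub).comp iotaHom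

theorem pgHom_inj : Function.Injective pgHom := by
  rw [injective_iff_map_eq_one]
  intro A hA
  have hm : iotaHom A ∈ scalarSub := (QuotientGroup.eq_one_iff _).1 hA
  obtain ⟨c, hc⟩ := hm
  have hv : ∀ i j, (algebraMap ℂ (Matrix (Fin 3) (Fin 3) ℂ) c.1) i j = (iotaHom A).1 i j := by
    intro i j
    rw [← hc]; rfl
  simp only [iotaHom_val, Matrix.algebraMap_matrix_apply] at hv
  have h22 := hv 2 2
  have h00 := hv 0 0
  have h01 := hv 0 1
  have h10 := hv 1 0
  have h11 := hv 1 1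
  simp at h22 h00 h01 h10 h11
  ext i j
  fin_cases i <;> fin_cases j <;> simp_all

theorem GG_iota (A : GL (Fin 2) ℂ) (hA : A ∈ HH) (v : Fin 3 → ℂ) :
    GG ((iotaHom A).1 *ᵥ v) = GG v := by
  have := (mem_HH A).1 hA (v 0) (v 1)
  rw [GG, GG, ← this]
  simp [iotaHom_val, Matrix.mulVec, dotProduct, Fin.sum_univ_three]

theorem iota_preserves (A : GL (Fin 2) ℂ) (hA : A ∈ HH) : Preserves G12 (iotaHom A) := by
  unfold Preserves
  ext v
  simp only [eval_G12, Set.mem_image, Set.mem_setOf_eq]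
  constructor
  · rintro ⟨u, hu, rfl⟩
    rw [GG_iota A hA, hu]
  · intro hv
    refine ⟨(iotaHom A)⁻¹.1 *ᵥ v, ?_, GL_surj _ _⟩
    rw [← GG_iota A hA, GL_surj, hv]

theorem map_eq_Lin : HH.map pgHom = Lin G12 := by
  ext x
  constructor
  · rintro ⟨A, hA, rfl⟩
    exact ⟨iotaHom A, iota_preserves A hA, rfl⟩
  · rintro ⟨g, hg, rfl⟩
    have hg' : Preserves G12 g := hg
    obtain ⟨h02, h12, h20, h21, h22⟩ := block_form g hg'
    have hs := semi_inv g.1 (preserves_vanish g hg')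
    have hdet : g.1.det ≠ 0 := (Matrix.isUnit_iff_isUnit_det g.1 |>.1 g.isUnit).ne_zero
    set l := g.1 2 2 with hl
    let B : Matrix (Fin 2) (Fin 2) ℂ :=
      !![l⁻¹ * g.1 0 0, l⁻¹ * g.1 0 1; l⁻¹ * g.1 1 0, l⁻¹ * g.1 1 1]
    have hB : B.det ≠ 0 := by
      intro h0
      apply hdet
      rw [Matrix.det_fin_three, h02, h12, h20, h21]
      simp only [B, Matrix.det_fin_two_of] at h0
      field_simp at h0
      linear_combination g.1 2 2 * h0
    let A : GL (Fin 2) ℂ := Matrix.GeneralLinearGroup.mkOfDetNeZero B hB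
    have hA : A.1 = B := rfl
    refine ⟨A, (mem_HH A).2 ?_, ?_⟩
    · intro a b
      have h := hs ![a, b, 0]
      simp [GG, Matrix.mulVec, dotProduct, Fin.sum_univ_three, h02, h12, h20, h21] at h
      have h0 : FF (0 : ℂ) 0 = 0 := by simp [FF]
      rw [hA]
      simp only [B, Matrix.of_apply, Matrix.cons_val', Matrix.cons_val_zero, Matrix.cons_val_one,
        Matrix.cons_val_fin_one]
      have e1 : l⁻¹ * g.1 0 0 * a + l⁻¹ * g.1 0 1 * b = l⁻¹ * (g.1 0 0 * a + g.1 0 1 * b) := by ring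
      have e2 : l⁻¹ * g.1 1 0 * a + l⁻¹ * g.1 1 1 * b = l⁻¹ * (g.1 1 0 * a + g.1 1 1 * b) := by ring
      rw [e1, e2, FF_smul, h]
      simp only [h0, add_zero, ← hl]
      field_simp
    · refine (QuotientGroup.eq (s := scalarSub)).2 ?_
      refine ⟨Units.mk0 l h22, ?_⟩
      rw [eq_inv_mul_iff_mul_eq]
      ext i j
      rw [Units.val_mul, iotaHom_val, hA]
      have hc : ((Units.map (algebraMap ℂ (Matrix (Fin 3) (Fin 3) ℂ)).toMonoidHom)
        (Units.mk0 l h22)).1 = l • (1 : Matrix (Fin 3) (Fin 3) ℂ) := by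
        show algebraMap ℂ (Matrix (Fin 3) (Fin 3) ℂ) l = _
        exact Algebra.algebraMap_eq_smul_one l
      rw [hc, Matrix.mul_smul, mul_one, Matrix.smul_apply, smul_eq_mul]
      fin_cases i <;> fin_cases j <;>
        simp [B, h02, h12, h20, h21, ← hl] <;> field_simp

def linEquiv : Lin G12 ≃*
    Multiplicative (ZMod 3) × (SL25 ⋊[phi] Multiplicative (ZMod 2)) :=
  ((MulEquiv.subgroupCongr map_eq_Lin).symm.trans
    (HH.equivMapOfInjective pgHom pgHom_inj).symm).trans DHequiv.symm

theorem stmt8 :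
    Nat.card (Lin G12) = 720 ∧
    ∃ φ : Multiplicative (ZMod 2) →* MulAut (Matrix.SpecialLinearGroup (Fin 2) (ZMod 5)),
      Nonempty (Lin G12 ≃*
        Multiplicative (ZMod 3) ×
          (Matrix.SpecialLinearGroup (Fin 2) (ZMod 5) ⋊[φ] Multiplicative (ZMod 2))) := by
  refine ⟨?_, phi, ⟨linEquiv⟩⟩
  rw [Nat.card_congr linEquiv.toEquiv]
  exact card_D
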